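/- Let Ω ⊂ ℝⁿ (n ≥ 2) be a bounded open convex domain satisfying the interior sphere condition with radius R > 0. Suppose F : Ω × (−∞,0) → ℝ is continuous and non-decreasing in its second argument, and there are constants A > 0, α ≥ 0, β ≥ n+1 such that F(x,t) ≥ A·d_x^{β−n−1}·|t|^{−α} for all x ∈ Ω and t < 0. If u is a classical solution of det D²u = F(x,u) in Ω with u = 0 on ∂Ω, then there is a constant C > 0 depending only on β, α, A, n and R such that |u(y)| ≥ C·d_y^{β/(n+α)} for every y ∈ Ω. -/

import Mathlib

/-- The determinant of the Hessian matrix of `u` at `x`. -/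
noncomputable def hessianDet {n : ℕ} (u : EuclideanSpace ℝ (Fin n) → ℝ)
    (x : EuclideanSpace ℝ (Fin n)) : ℝ :=
  (Matrix.of fun i j : Fin n =>
    iteratedFDeriv ℝ 2 u x ![EuclideanSpace.single i (1 : ℝ), EuclideanSpace.single j (1 : ℝ)]).det

/-- `u` is a classical solution of `det D²u = F(x,u)` in `Ω`, `u = 0` on `∂Ω`. -/
def IsClassicalSolution {n : ℕ} (Ω : Set (EuclideanSpace ℝ (Fin n)))
    (F : EuclideanSpace ℝ (Fin n) → ℝ → ℝ) (u : EuclideanSpace ℝ (Fin n) → ℝ) : Prop :=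
  ContinuousOn u (closure Ω) ∧ ConvexOn ℝ Ω u ∧ ContDiffOn ℝ 2 u Ω ∧
    (∀ x ∈ Ω, u x < 0) ∧ (∀ x ∈ frontier Ω, u x = 0) ∧
    ∀ x ∈ Ω, hessianDet u x = F x (u x)

/-- `F` is continuous on `Ω × (-∞,0)`, non-decreasing in its second argument, and satisfies the
lower bound `F(x,t) ≥ A d_x^{β-n-1} |t|^{-α}`. -/
def SatisfiesFLowerBound {n : ℕ} (Ω : Set (EuclideanSpace ℝ (Fin n)))
    (F : EuclideanSpace ℝ (Fin n) → ℝ → ℝ) (A α β : ℝ) : Prop :=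
  ContinuousOn (fun p : EuclideanSpace ℝ (Fin n) × ℝ => F p.1 p.2) (Ω ×ˢ Set.Iio (0 : ℝ)) ∧
    (∀ x ∈ Ω, ∀ s t : ℝ, s ≤ t → t < 0 → F x s ≤ F x t) ∧
    ∀ x ∈ Ω, ∀ t : ℝ, t < 0 →
      A * Metric.infDist x (frontier Ω) ^ (β - n - 1) * |t| ^ (-α) ≤ F x t

/-- `Ω` satisfies the interior sphere condition with radius `R`: through every boundary
point there is a closed ball of radius `R` contained in the closure of `Ω`. -/
def InteriorSphereCond {n : ℕ} (Ω : Set (EuclideanSpace ℝ (Fin n))) (R : ℝ) : Prop :=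
  ∀ x₀ ∈ frontier Ω, ∃ y₀ : EuclideanSpace ℝ (Fin n),
    Metric.closedBall y₀ R ⊆ closure Ω ∧ x₀ ∈ Metric.sphere y₀ R

/-!
Write `d` for the distance from `y` to the boundary. The interior sphere at the nearest boundary
point lets an ellipsoid centred at `y`, with semi-axis `d / 4` in the normal direction and
`√(d * R / 2)` in the tangential ones, sit in `Ω` at distance at least `d / 4` from the boundary.
If `Q ≤ 1` defines this ellipsoid, then `u - |u y| * Q` has an interior maximum `x`, where comparing
Hessians bounds `det D²u` above by `(2 * |u y|) ^ n * (16 / d ^ 2) * (2 / (d * R)) ^ (n - 1)`. By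
convexity and the symmetry of the ellipsoid about `y`, `|u x| ≤ 2 * |u y|`, so the lower bound on
`det D²u` at `x` becomes an inequality between powers of `d` and `|u y|`.
-/

open Filter Metric Set Topology

section MatrixDeterminant

open scoped ComplexOrder MatrixOrder

variable {ι 𝕜 : Type*} [Fintype ι] [DecidableEq ι] [RCLike 𝕜]

theorem one_le_det_one_add_of_posSemidef {P : Matrix ι ι 𝕜} (hP : P.PosSemidef) :
    1 ≤ (1 + P).det := by
  have hdet : (1 + P).det = ∏ i, ((1 + hP.isHermitian.eigenvalues i : ℝ) : 𝕜) := by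
    conv_lhs => rw [hP.isHermitian.spectral_theorem, ← map_one (Unitary.conjStarAlgAut 𝕜 _ _),
      ← map_add, ← Matrix.diagonal_one, Matrix.diagonal_add, Unitary.conjStarAlgAut_apply,
      Matrix.det_mul_right_comm, Unitary.mul_star_self_of_mem (Subtype.prop _), one_mul]
    simp
  rw [hdet, ← RCLike.ofReal_prod, ← RCLike.ofReal_one, RCLike.ofReal_le_ofReal]
  exact Finset.one_le_prod fun i _ => le_add_of_nonneg_right (hP.eigenvalues_nonneg i)

theorem det_le_det_of_posSemidef_sub {M N : Matrix ι ι 𝕜} (hM : M.PosSemidef)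
    (hNM : (N - M).PosSemidef) : M.det ≤ N.det := by
  by_cases hM₀ : M.det = 0
  · have hN : N.PosSemidef := by simpa using hM.add hNM
    exact hM₀.trans_le hN.det_nonneg
  obtain ⟨B, hB⟩ := CStarAlgebra.nonneg_iff_eq_star_mul_self.1 (Matrix.nonneg_iff_posSemidef.2 hM)
  rw [Matrix.star_eq_conjTranspose] at hB
  have hBunit : IsUnit B.det := isUnit_iff_ne_zero.2 fun h => hM₀ (by simp [hB, h])
  have hBstar : B.conjTranspose * B⁻¹.conjTranspose = 1 := by
    rw [← Matrix.conjTranspose_mul, Matrix.nonsing_inv_mul _ hBunit, Matrix.conjTranspose_one]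
  set P := B⁻¹.conjTranspose * (N - M) * B⁻¹
  have hN : N = B.conjTranspose * (1 + P) * B := by
    calc N = B.conjTranspose * B + 1 * (N - M) * 1 := by simp [← hB]
      _ = B.conjTranspose * B + (B.conjTranspose * B⁻¹.conjTranspose) * (N - M) * (B⁻¹ * B) := by
        rw [hBstar, Matrix.nonsing_inv_mul B hBunit]
      _ = B.conjTranspose * (1 + P) * B := by
        simp only [P]
        noncomm_ring
  have hdet : N.det = M.det * (1 + P).det := by
    rw [hN, hB]
    simp only [Matrix.det_mul]
    ring
  rw [hdet]
  exact le_mul_of_one_le_right hM.det_nonneg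
    (one_le_det_one_add_of_posSemidef (hNM.conjTranspose_mul_mul_same _))

end MatrixDeterminant

section SecondDerivative

theorem deriv_deriv_nonpos_of_isLocalMax {f : ℝ → ℝ} {x : ℝ} (hf : ContinuousAt f x)
    (hmax : IsLocalMax f x) : deriv (deriv f) x ≤ 0 := by
  by_contra! hpos
  have hmin : IsLocalMin f x := isLocalMin_of_deriv_deriv_pos hpos hmax.deriv_eq_zero hf
  have hconst : f =ᶠ[𝓝 x] fun _ => f x := by
    filter_upwards [hmax, hmin] with t hle hge using le_antisymm hle hge
  simp [hconst.deriv.deriv_eq] at hpos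

theorem deriv_deriv_nonneg_of_convexOn {f : ℝ → ℝ} {s : Set ℝ} {x : ℝ} (hs : s ∈ 𝓝 x)
    (hconv : ConvexOn ℝ s f) (hf : ∀ᶠ t in 𝓝 x, DifferentiableAt ℝ f t) :
    0 ≤ deriv (deriv f) x := by
  obtain ⟨r, hr, hball⟩ := Metric.mem_nhds_iff.1 (inter_mem hs hf)
  have hmono : MonotoneOn (deriv f) (ball x r) :=
    (hconv.subset (hball.trans inter_subset_left) (convex_ball x r)).monotoneOn_deriv
      fun t ht => (hball ht).2
  rw [← derivWithin_of_mem_nhds (ball_mem_nhds x hr)]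
  exact hmono.derivWithin_nonneg

variable {E : Type*} [NormedAddCommGroup E] [NormedSpace ℝ E]

theorem eventually_differentiableAt_of_contDiffAt_two {f : E → ℝ} {x : E}
    (hf : ContDiffAt ℝ 2 f x) : ∀ᶠ z in 𝓝 x, DifferentiableAt ℝ f z :=
  (hf.eventually (by simp)).mono fun _ hz => hz.differentiableAt (by simp)

theorem differentiableAt_fderiv_of_contDiffAt_two {f : E → ℝ} {x : E}
    (hf : ContDiffAt ℝ 2 f x) : DifferentiableAt ℝ (fderiv ℝ f) x :=
  (hf.fderiv_right (m := 1) (by norm_num)).differentiableAt (by simp)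

theorem tendsto_add_smul_nhds_zero (x v : E) :
    Tendsto (fun t : ℝ => x + t • v) (𝓝 0) (𝓝 x) := by
  have hcont : Continuous fun t : ℝ => x + t • v := by fun_prop
  simpa using hcont.tendsto 0

theorem deriv_deriv_comp_add_smul {f : E → ℝ} {x : E} (hf : ContDiffAt ℝ 2 f x) (v : E) :
    deriv (deriv fun t : ℝ => f (x + t • v)) 0 = fderiv ℝ (fderiv ℝ f) x v v := by
  have hline (t : ℝ) : HasDerivAt (fun t : ℝ => x + t • v) v t := by
    simpa using ((hasDerivAt_id t).smul_const v).const_add x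
  have hfirst : deriv (fun t : ℝ => f (x + t • v)) =ᶠ[𝓝 0] fun t => fderiv ℝ f (x + t • v) v := by
    filter_upwards [(tendsto_add_smul_nhds_zero x v).eventually
      (eventually_differentiableAt_of_contDiffAt_two hf)] with t ht
    exact (ht.hasFDerivAt.comp_hasDerivAt t (hline t)).deriv
  have hsecond : HasFDerivAt (fderiv ℝ f) (fderiv ℝ (fderiv ℝ f) x) (x + (0 : ℝ) • v) := by
    simpa using (differentiableAt_fderiv_of_contDiffAt_two hf).hasFDerivAt
  rw [hfirst.deriv_eq]
  have hcomp := hsecond.comp_hasDerivAt (0 : ℝ) (hline 0)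
  simpa using (hcomp.clm_apply (hasDerivAt_const (0 : ℝ) v)).deriv

theorem fderiv_fderiv_apply_self_nonpos_of_isLocalMax {f : E → ℝ} {x : E}
    (hf : ContDiffAt ℝ 2 f x) (hmax : IsLocalMax f x) (v : E) :
    fderiv ℝ (fderiv ℝ f) x v v ≤ 0 := by
  have hline := tendsto_add_smul_nhds_zero x v
  rw [← deriv_deriv_comp_add_smul hf]
  refine deriv_deriv_nonpos_of_isLocalMax ?_ ?_
  · simpa [ContinuousAt, Function.comp_def] using hf.continuousAt.tendsto.comp hline
  · simpa [IsLocalMax, IsMaxFilter] using hline.eventually hmax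

theorem fderiv_fderiv_apply_self_nonneg_of_convexOn {f : E → ℝ} {s : Set E} {x : E}
    (hf : ContDiffAt ℝ 2 f x) (hs : s ∈ 𝓝 x) (hconv : ConvexOn ℝ s f) (v : E) :
    0 ≤ fderiv ℝ (fderiv ℝ f) x v v := by
  have hline := tendsto_add_smul_nhds_zero x v
  rw [← deriv_deriv_comp_add_smul hf]
  refine deriv_deriv_nonneg_of_convexOn (hline hs) ?_ ?_
  · convert hconv.comp_affineMap (AffineMap.lineMap x (x + v)) using 1 <;>
      ext t <;> simp [AffineMap.lineMap_apply, add_comm]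
  · filter_upwards [hline.eventually (eventually_differentiableAt_of_contDiffAt_two hf)] with t ht
    exact DifferentiableAt.comp t ht (by fun_prop)

theorem fderiv_fderiv_sub {f g : E → ℝ} {x : E} (hf : ContDiffAt ℝ 2 f x)
    (hg : ContDiffAt ℝ 2 g x) :
    fderiv ℝ (fderiv ℝ fun z => f z - g z) x =
      fderiv ℝ (fderiv ℝ f) x - fderiv ℝ (fderiv ℝ g) x := by
  have hfirst : fderiv ℝ (fun z => f z - g z) =ᶠ[𝓝 x] fun z => fderiv ℝ f z - fderiv ℝ g z := by
    filter_upwards [eventually_differentiableAt_of_contDiffAt_two hf,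
      eventually_differentiableAt_of_contDiffAt_two hg] with z hfz hgz using fderiv_fun_sub hfz hgz
  rw [hfirst.fderiv_eq]
  exact fderiv_fun_sub (differentiableAt_fderiv_of_contDiffAt_two hf)
    (differentiableAt_fderiv_of_contDiffAt_two hg)

theorem fderiv_fderiv_bilin_sub_self (B : E →L[ℝ] E →L[ℝ] ℝ) (hB : ∀ v w, B v w = B w v)
    (x y : E) : fderiv ℝ (fderiv ℝ fun z => B (z - y) (z - y)) x = (2 : ℝ) • B := by
  have hid (z : E) : HasFDerivAt (fun z : E => z - y) (.id ℝ E) z :=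
    (hasFDerivAt_id z).sub_const y
  have hfirst : (fderiv ℝ fun z => B (z - y) (z - y)) = fun z => ((2 : ℝ) • B) (z - y) := by
    ext z v
    rw [(B.hasFDerivAt_of_bilinear (hid z) (hid z)).fderiv]
    simp [hB v, two_mul]
  rw [hfirst]
  exact (((2 : ℝ) • B).hasFDerivAt.comp x (hid x)).fderiv

end SecondDerivative

section HessianComparison

variable {ι : Type*} [DecidableEq ι]

/-- The matrix of a bilinear form on Euclidean space in the standard basis. -/
noncomputable def bilinMatrix (B : EuclideanSpace ℝ ι →L[ℝ] EuclideanSpace ℝ ι →L[ℝ] ℝ) :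
    Matrix ι ι ℝ :=
  Matrix.of fun i j => B (EuclideanSpace.single i 1) (EuclideanSpace.single j 1)

theorem bilinMatrix_sub (B C : EuclideanSpace ℝ ι →L[ℝ] EuclideanSpace ℝ ι →L[ℝ] ℝ) :
    bilinMatrix (B - C) = bilinMatrix B - bilinMatrix C := rfl

theorem bilinMatrix_smul (c : ℝ) (B : EuclideanSpace ℝ ι →L[ℝ] EuclideanSpace ℝ ι →L[ℝ] ℝ) :
    bilinMatrix (c • B) = c • bilinMatrix B := rfl

theorem posSemidef_bilinMatrix [Finite ι] {B : EuclideanSpace ℝ ι →L[ℝ] EuclideanSpace ℝ ι →L[ℝ] ℝ}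
    (hsymm : ∀ v w, B v w = B w v) (hnonneg : ∀ v, 0 ≤ B v v) : (bilinMatrix B).PosSemidef := by
  have := Fintype.ofFinite ι
  have hB : B.toBilinForm.IsPosSemidef := ⟨⟨hsymm⟩, ⟨hnonneg⟩⟩
  have hmatrix : bilinMatrix B = LinearMap.toMatrix₂ (EuclideanSpace.basisFun ι ℝ).toBasis
      (EuclideanSpace.basisFun ι ℝ).toBasis B.toBilinForm := by
    ext i j
    simp [bilinMatrix, LinearMap.toMatrix₂_apply]
  rw [hmatrix]
  exact (LinearMap.isPosSemidef_iff_posSemidef_toMatrix _).1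
    (LinearMap.BilinForm.isPosSemidef_iff.1 hB)

variable {n : ℕ} {u q : EuclideanSpace ℝ (Fin n) → ℝ} {x : EuclideanSpace ℝ (Fin n)}

theorem hessianDet_eq_det_bilinMatrix :
    hessianDet u x = (bilinMatrix (fderiv ℝ (fderiv ℝ u) x)).det := by
  simp [hessianDet, bilinMatrix, iteratedFDeriv_two_apply]

theorem hessianDet_le_of_isLocalMax_sub {s : Set (EuclideanSpace ℝ (Fin n))}
    (hu : ContDiffAt ℝ 2 u x) (hq : ContDiffAt ℝ 2 q x) (hs : s ∈ 𝓝 x) (hconv : ConvexOn ℝ s u)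
    (hmax : IsLocalMax (fun z => u z - q z) x) : hessianDet u x ≤ hessianDet q x := by
  have husymm := (hu.isSymmSndFDerivAt (by simp)).eq
  have hqsymm := (hq.isSymmSndFDerivAt (by simp)).eq
  rw [hessianDet_eq_det_bilinMatrix, hessianDet_eq_det_bilinMatrix]
  refine det_le_det_of_posSemidef_sub (posSemidef_bilinMatrix husymm
    (fderiv_fderiv_apply_self_nonneg_of_convexOn hu hs hconv)) ?_
  rw [← bilinMatrix_sub]
  refine posSemidef_bilinMatrix (fun v w => ?_) fun v => ?_
  · simp [husymm v w, hqsymm v w]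
  · have hle := fderiv_fderiv_apply_self_nonpos_of_isLocalMax (hu.sub hq) hmax v
    rw [fderiv_fderiv_sub hu hq] at hle
    simpa using hle

end HessianComparison

section EllipsoidForm

variable {E : Type*} [NormedAddCommGroup E] [InnerProductSpace ℝ E]

/-- For a unit vector `e`, the bilinear form with eigenvalue `a` on the line `ℝ e` and `b` on its
orthogonal complement; its quadratic form, scaled by `|u y|`, is the barrier for `u`. -/
noncomputable def ellipsoidForm (a b : ℝ) (e : E) : E →L[ℝ] E →L[ℝ] ℝ :=
  let innerForm : E →L[ℝ] E →L[ℝ] ℝ := innerSL ℝ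
  b • innerForm + (a - b) • (innerSL ℝ e).smulRight (innerSL ℝ e)

theorem ellipsoidForm_apply (a b : ℝ) (e v w : E) :
    ellipsoidForm a b e v w = b * inner ℝ v w + (a - b) * (inner ℝ e v * inner ℝ e w) := rfl

theorem ellipsoidForm_comm (a b : ℝ) (e v w : E) :
    ellipsoidForm a b e v w = ellipsoidForm a b e w v := by
  rw [ellipsoidForm_apply, ellipsoidForm_apply, real_inner_comm, mul_comm (inner ℝ e v)]

theorem ellipsoidForm_apply_self (a b : ℝ) (e z : E) :
    ellipsoidForm a b e z z = a * inner ℝ e z ^ 2 + b * (‖z‖ ^ 2 - inner ℝ e z ^ 2) := by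
  rw [ellipsoidForm_apply, real_inner_self_eq_norm_sq]
  ring

theorem det_bilinMatrix_ellipsoidForm {n : ℕ} (a : ℝ) {b : ℝ} (hb : b ≠ 0)
    {e : EuclideanSpace ℝ (Fin n)} (he : ‖e‖ = 1) :
    (bilinMatrix (ellipsoidForm a b e)).det = a * b ^ (n - 1) := by
  have hrank : bilinMatrix (ellipsoidForm a b e) = b • (1 + Matrix.replicateCol Unit e.ofLp *
      Matrix.replicateRow Unit (((a - b) / b) • e.ofLp)) := by
    ext i j
    have hentry : bilinMatrix (ellipsoidForm a b e) i j =
        b * (1 : Matrix (Fin n) (Fin n) ℝ) i j + (a - b) * (e i * e j) := by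
      simp [bilinMatrix, ellipsoidForm_apply, Matrix.one_apply,
        EuclideanSpace.inner_single_right, eq_comm (a := j)]
    have hproduct : (Matrix.replicateCol Unit e.ofLp *
        Matrix.replicateRow Unit (((a - b) / b) • e.ofLp)) i j = e i * ((a - b) / b * e j) := by
      simp [Matrix.mul_apply, mul_left_comm]
    rw [hentry, Matrix.smul_apply, Matrix.add_apply, hproduct, smul_eq_mul]
    field_simp
  have hee : e.ofLp ⬝ᵥ e.ofLp = 1 := by
    simpa [he, dotProduct, sq] using (EuclideanSpace.real_norm_sq_eq e).symm
  obtain ⟨k, rfl⟩ : ∃ k, n = k + 1 := Nat.exists_eq_succ_of_ne_zero <| by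
    rintro rfl
    simp at hee
  rw [hrank, Matrix.det_smul, Matrix.det_one_add_replicateCol_mul_replicateRow, smul_dotProduct,
    hee]
  simp only [Fintype.card_fin, smul_eq_mul, Nat.add_sub_cancel]
  field_simp
  ring

theorem hessianDet_mul_ellipsoidForm {n : ℕ} (m a : ℝ) {b : ℝ} (hb : b ≠ 0)
    {e : EuclideanSpace ℝ (Fin n)} (he : ‖e‖ = 1) (x y : EuclideanSpace ℝ (Fin n)) :
    hessianDet (fun z => m * ellipsoidForm a b e (z - y) (z - y)) x =
      (2 * m) ^ n * (a * b ^ (n - 1)) := by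
  have hhess : fderiv ℝ (fderiv ℝ fun z => m * ellipsoidForm a b e (z - y) (z - y)) x =
      (2 : ℝ) • m • ellipsoidForm a b e :=
    fderiv_fderiv_bilin_sub_self (m • ellipsoidForm a b e)
      (fun v w => congrArg (m * ·) (ellipsoidForm_comm a b e v w)) x y
  rw [hessianDet_eq_det_bilinMatrix, hhess, smul_smul, bilinMatrix_smul, Matrix.det_smul,
    Fintype.card_fin, det_bilinMatrix_ellipsoidForm a hb he]

/-- The closed solid ellipsoid centred at `y` with axis `e`; for a unit vector `e` its semi-axes are
`a ^ (-1/2)` along `e` and `b ^ (-1/2)` in the orthogonal directions. -/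
def ellipsoid (a b : ℝ) (e y : E) : Set E :=
  {x | ellipsoidForm a b e (x - y) (x - y) ≤ 1}

theorem continuous_ellipsoidForm_sub (a b : ℝ) (e y : E) :
    Continuous fun x => ellipsoidForm a b e (x - y) (x - y) := by
  fun_prop

theorem isClosed_ellipsoid (a b : ℝ) (e y : E) : IsClosed (ellipsoid a b e y) :=
  isClosed_le (continuous_ellipsoidForm_sub a b e y) continuous_const

theorem center_mem_ellipsoid (a b : ℝ) (e y : E) : y ∈ ellipsoid a b e y := by
  simp [ellipsoid]

theorem pointReflection_mem_ellipsoid {a b : ℝ} {e x y : E} (hx : x ∈ ellipsoid a b e y) :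
    Equiv.pointReflection y x ∈ ellipsoid a b e y := by
  have hsub : Equiv.pointReflection y x - y = -(x - y) := by
    simp [Equiv.pointReflection_apply]
  simpa only [ellipsoid, mem_ofPred_eq, hsub, map_neg, neg_apply, neg_neg] using hx

theorem norm_add_smul_le_of_ellipsoidForm_le_one {d ρ R : ℝ} {e z : E} (hd : 0 < d) (hdρ : d ≤ ρ)
    (hR : 0 < R) (hRρ : R ≤ ρ) (he : ‖e‖ = 1)
    (hz : ellipsoidForm (16 / d ^ 2) (2 / (d * R)) e z z ≤ 1) :
    ‖z + (ρ - d) • e‖ ≤ ρ - d / 4 := by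
  set s : ℝ := inner ℝ e z with hs
  have hsz : s ^ 2 ≤ ‖z‖ ^ 2 := by
    rw [sq_le_sq, abs_norm]
    simpa [he] using abs_real_inner_le_norm e z
  rw [ellipsoidForm_apply_self, ← hs] at hz
  have haxis : s ^ 2 ≤ (d / 4) ^ 2 := by
    have h : 16 / d ^ 2 * s ^ 2 ≤ 1 :=
      (le_add_of_nonneg_right (mul_nonneg (by positivity) (sub_nonneg.2 hsz))).trans hz
    rw [div_mul_eq_mul_div, div_le_one (by positivity)] at h
    linarith
  have htransverse : ‖z‖ ^ 2 - s ^ 2 ≤ d * R / 2 := by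
    have h : 2 / (d * R) * (‖z‖ ^ 2 - s ^ 2) ≤ 1 :=
      (le_add_of_nonneg_left (by positivity)).trans hz
    rw [div_mul_eq_mul_div, div_le_one (by positivity)] at h
    linarith
  obtain ⟨hslo, hshi⟩ := abs_le.1 (abs_le_of_sq_le_sq haxis (by positivity))
  have hshift : (s + (ρ - d)) ^ 2 ≤ (ρ - 3 * d / 4) ^ 2 := by
    apply sq_le_sq' <;> linarith
  have hdR : d * R ≤ d * ρ := by gcongr
  have hdd : d * d ≤ d * ρ := by gcongr
  refine le_of_sq_le_sq ?_ (by linarith)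
  calc ‖z + (ρ - d) • e‖ ^ 2 = ‖z‖ ^ 2 - s ^ 2 + (s + (ρ - d)) ^ 2 := by
        rw [norm_add_sq_real, inner_smul_right, real_inner_comm, norm_smul, he, mul_one,
          Real.norm_eq_abs, sq_abs, ← hs]
        ring
    _ ≤ d * R / 2 + (ρ - 3 * d / 4) ^ 2 := add_le_add htransverse hshift
    _ ≤ (ρ - d / 4) ^ 2 := by linarith

end EllipsoidForm

section InteriorBall

theorem infDist_frontier_eq_infDist_compl {E : Type*} [NormedAddCommGroup E] [NormedSpace ℝ E]
    [FiniteDimensional ℝ E] {s : Set E} {x : E} (hx : x ∈ s) :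
    infDist x (frontier s) = infDist x sᶜ := by
  rcases eq_or_ne s univ with rfl | hs
  · simp
  obtain ⟨z, hz, hxz⟩ := exists_mem_frontier_infDist_compl_eq_dist hx hs
  refine le_antisymm (hxz ▸ infDist_le_dist_of_mem hz) ?_
  rw [← infDist_closure (s := sᶜ)]
  refine infDist_le_infDist_of_subset ?_ ⟨z, hz⟩
  rw [frontier_eq_closure_inter_closure]
  exact inter_subset_right

theorem infDist_frontier_pos_of_isOpen {E : Type*} [NormedAddCommGroup E] [NormedSpace ℝ E]
    [FiniteDimensional ℝ E] {s : Set E} {x : E} (hopen : IsOpen s) (hs : s ≠ univ) (hx : x ∈ s) :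
    0 < infDist x (frontier s) := by
  rw [infDist_frontier_eq_infDist_compl hx]
  exact (hopen.isClosed_compl.notMem_iff_infDist_pos (nonempty_compl.2 hs)).1 (not_not.2 hx)

theorem le_infDist_compl_of_ball_subset {X : Type*} [PseudoMetricSpace X] {s : Set X} {x : X}
    {r : ℝ} (hs : s ≠ univ) (hball : ball x r ⊆ s) : r ≤ infDist x sᶜ :=
  (le_infDist (nonempty_compl.2 hs)).2 fun _ hz =>
    not_lt.1 fun hlt => hz (hball (mem_ball'.2 hlt))

variable {E : Type*} [NormedAddCommGroup E] [InnerProductSpace ℝ E]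

theorem exists_unit_normal_of_notMem [CompleteSpace E] {s : Set E} {x : E} (hconv : Convex ℝ s)
    (hopen : IsOpen s) (hne : s.Nonempty) (hx : x ∉ s) :
    ∃ e : E, ‖e‖ = 1 ∧ ∀ z ∈ closure s, inner ℝ e z ≤ inner ℝ e x := by
  obtain ⟨f, hf⟩ := geometric_hahn_banach_open_point hconv hopen hx
  set w := (InnerProductSpace.toDual ℝ E).symm f
  have hwf (z : E) : inner ℝ w z = f z := InnerProductSpace.toDual_symm_apply
  have hw : w ≠ 0 := by
    obtain ⟨y, hy⟩ := hne
    intro hw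
    simpa [← hwf, hw] using hf y hy
  have hle : closure s ⊆ {z | f z ≤ f x} :=
    closure_minimal (fun z hz => (hf z hz).le) (isClosed_le f.continuous continuous_const)
  refine ⟨‖w‖⁻¹ • w, norm_smul_inv_norm hw, fun z hz => ?_⟩
  rw [real_inner_smul_left, real_inner_smul_left, hwf, hwf]
  exact mul_le_mul_of_nonneg_left (hle hz) (by positivity)

theorem sub_center_eq_smul_of_closedBall_subset_halfSpace {e x c : E} {r : ℝ} (he : ‖e‖ = 1)
    (hx : x ∈ sphere c r) (hball : ∀ z ∈ closedBall c r, inner ℝ e z ≤ inner ℝ e x) :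
    x - c = r • e := by
  have hxc : ‖x - c‖ = r := mem_sphere_iff_norm.1 hx
  have hr : 0 ≤ r := hxc ▸ norm_nonneg _
  have hpole : c + r • e ∈ closedBall c r := by simp [norm_smul, he, abs_of_nonneg hr]
  have hle : r ≤ inner ℝ (x - c) e := by
    have h := hball _ hpole
    rw [inner_add_right, real_inner_smul_right, real_inner_self_eq_norm_sq, he] at h
    rw [real_inner_comm, inner_sub_right]
    linarith
  have hcauchy : inner ℝ (x - c) e = ‖x - c‖ * ‖e‖ :=
    le_antisymm (real_inner_le_norm _ _) (by rwa [hxc, he, mul_one])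
  simpa [he, hxc] using inner_eq_norm_mul_iff_real.1 hcauchy

variable {n : ℕ} {Ω : Set (EuclideanSpace ℝ (Fin n))} {R : ℝ} {y : EuclideanSpace ℝ (Fin n)}

-- The nearest boundary point to `y` has a supporting hyperplane, to which both the ball around `y`
-- and the interior sphere are tangent, so their centres lie on a common normal line.
theorem exists_ball_subset_of_interiorSphereCond (hopen : IsOpen Ω) (hconv : Convex ℝ Ω)
    (hΩ : Ω ≠ univ) (hsphere : InteriorSphereCond Ω R) (hy : y ∈ Ω) :
    ∃ (ρ : ℝ) (e c : EuclideanSpace ℝ (Fin n)), infDist y (frontier Ω) ≤ ρ ∧ R ≤ ρ ∧ ‖e‖ = 1 ∧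
      ball c ρ ⊆ Ω ∧ y - c = (ρ - infDist y (frontier Ω)) • e := by
  obtain ⟨x₀, hx₀, hdist⟩ := exists_mem_frontier_infDist_compl_eq_dist hy hΩ
  rw [infDist_frontier_eq_infDist_compl hy]
  set d := infDist y Ωᶜ
  have hx₀Ω : x₀ ∉ Ω := (hopen.frontier_eq.subset hx₀).2
  obtain ⟨e, he, hnormal⟩ := exists_unit_normal_of_notMem hconv hopen ⟨y, hy⟩ hx₀Ω
  rcases le_total R d with hRd | hdR
  · exact ⟨d, e, y, le_rfl, hRd, he, ball_infDist_compl_subset, by simp⟩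
  obtain ⟨c, hball, hx₀c⟩ := hsphere x₀ hx₀
  have hinterior : interior (closure Ω) = Ω := by
    rw [hconv.interior_closure_eq_interior_of_nonempty_interior
      (by rw [hopen.interior_eq]; exact ⟨y, hy⟩), hopen.interior_eq]
  refine ⟨R, e, c, hdR, le_rfl, he, ?_, ?_⟩
  · rw [← hinterior]
    exact interior_maximal (ball_subset_closedBall.trans hball) isOpen_ball
  · have hx₀y : x₀ - y = d • e :=
      sub_center_eq_smul_of_closedBall_subset_halfSpace he (by rw [mem_sphere', ← hdist])
        fun z hz => hnormal z (closedBall_infDist_compl_subset_closure hy hz)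
    have hx₀c : x₀ - c = R • e :=
      sub_center_eq_smul_of_closedBall_subset_halfSpace he hx₀c fun z hz => hnormal z (hball hz)
    rw [sub_smul, ← hx₀y, ← hx₀c]
    abel

theorem exists_ellipsoid_subset_of_interiorSphereCond (hopen : IsOpen Ω) (hconv : Convex ℝ Ω)
    (hΩ : Ω ≠ univ) (hR : 0 < R) (hsphere : InteriorSphereCond Ω R) (hy : y ∈ Ω) {d : ℝ}
    (hd : d = infDist y (frontier Ω)) :
    ∃ e : EuclideanSpace ℝ (Fin n), ‖e‖ = 1 ∧
      IsCompact (ellipsoid (16 / d ^ 2) (2 / (d * R)) e y) ∧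
      ∀ x ∈ ellipsoid (16 / d ^ 2) (2 / (d * R)) e y, x ∈ Ω ∧ d / 4 ≤ infDist x (frontier Ω) := by
  have hdpos : 0 < d := hd ▸ infDist_frontier_pos_of_isOpen hopen hΩ hy
  obtain ⟨ρ, e, c, hdρ, hRρ, he, hball, hyc⟩ :=
    exists_ball_subset_of_interiorSphereCond hopen hconv hΩ hsphere hy
  rw [← hd] at hdρ hyc
  have hsubset : ellipsoid (16 / d ^ 2) (2 / (d * R)) e y ⊆ closedBall c (ρ - d / 4) := by
    intro x hx
    rw [mem_closedBall_iff_norm, ← sub_add_sub_cancel x y c, hyc]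
    exact norm_add_smul_le_of_ellipsoidForm_le_one hdpos hdρ hR hRρ he hx
  refine ⟨e, he, (isCompact_closedBall _ _).of_isClosed_subset (isClosed_ellipsoid _ _ _ _) hsubset,
    fun x hx => ?_⟩
  have hxball : ball x (d / 4) ⊆ Ω :=
    (ball_subset_ball' (by linarith [mem_closedBall.1 (hsubset hx)])).trans hball
  have hxΩ : x ∈ Ω := hxball (mem_ball_self (by positivity))
  rw [infDist_frontier_eq_infDist_compl hxΩ]
  exact ⟨hxΩ, le_infDist_compl_of_ball_subset hΩ hxball⟩

end InteriorBall

section Barrier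

theorem two_mul_le_of_convexOn_of_pointReflection_mem {E : Type*} [AddCommGroup E] [Module ℝ E]
    {s : Set E} {u : E → ℝ} {x y : E} (hconv : ConvexOn ℝ s u) (hx : x ∈ s)
    (hx' : Equiv.pointReflection y x ∈ s) (hnonpos : u (Equiv.pointReflection y x) ≤ 0) :
    2 * u y ≤ u x := by
  have hmid : (1 / 2 : ℝ) • x + (1 / 2 : ℝ) • Equiv.pointReflection y x = y := by
    simp only [Equiv.pointReflection_apply, vsub_eq_sub, vadd_eq_add]
    module
  have h := hconv.2 hx hx' one_half_pos.le one_half_pos.le (add_halves (1 : ℝ))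
  rw [hmid, smul_eq_mul, smul_eq_mul] at h
  linarith

variable {n : ℕ} {Ω : Set (EuclideanSpace ℝ (Fin n))} {u : EuclideanSpace ℝ (Fin n) → ℝ}
  {y : EuclideanSpace ℝ (Fin n)}

-- `u - |u y| * ellipsoidForm` is less than `-|u y|` on the boundary of the ellipsoid and equal to
-- `-|u y|` at its centre, hence has an interior maximum.
theorem exists_mem_ellipsoid_hessianDet_le {a b : ℝ} {e : EuclideanSpace ℝ (Fin n)}
    (hopen : IsOpen Ω) (hconv : ConvexOn ℝ Ω u) (hdiff : ContDiffOn ℝ 2 u Ω)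
    (hneg : ∀ x ∈ Ω, u x < 0) (hb : b ≠ 0) (he : ‖e‖ = 1)
    (hcompact : IsCompact (ellipsoid a b e y)) (hsubset : ellipsoid a b e y ⊆ Ω) :
    ∃ x ∈ ellipsoid a b e y, hessianDet u x ≤ (2 * |u y|) ^ n * (a * b ^ (n - 1)) := by
  have hBcont := continuous_ellipsoidForm_sub a b e y
  have hcont : ContinuousOn (fun z => u z - |u y| * ellipsoidForm a b e (z - y) (z - y))
      (ellipsoid a b e y) :=
    (hdiff.continuousOn.mono hsubset).sub (by fun_prop)
  have hycenter := center_mem_ellipsoid a b e y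
  have hinner : {z | ellipsoidForm a b e (z - y) (z - y) < 1} ⊆ ellipsoid a b e y :=
    fun z (hz : ellipsoidForm a b e (z - y) (z - y) < 1) => hz.le
  obtain ⟨x, hx, hmax⟩ := hcompact.exists_isLocalMax_mem_open hinner hcont hycenter
    (fun z hz => by
      have hz1 : ellipsoidForm a b e (z - y) (z - y) = 1 := le_antisymm hz.1 (not_lt.1 hz.2)
      rw [hz1, sub_self y, map_zero, abs_of_neg (hneg y (hsubset hycenter))]
      linarith [hneg z (hsubset hz.1)])
    (isOpen_lt hBcont continuous_const)
  have hxmem : x ∈ ellipsoid a b e y := hinner hx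
  have hΩx : Ω ∈ 𝓝 x := hopen.mem_nhds (hsubset hxmem)
  refine ⟨x, hxmem, ?_⟩
  rw [← hessianDet_mul_ellipsoidForm |u y| a hb he x y]
  exact hessianDet_le_of_isLocalMax_sub (hdiff.contDiffAt hΩx) (by fun_prop) hΩx hconv hmax

variable {A α β R : ℝ}

theorem mul_rpow_mul_rpow_le_of_le_hessianDet (hA : 0 < A) (hα : 0 ≤ α)
    (hR : 0 < R) (hβ : (n : ℝ) + 1 ≤ β) (hopen : IsOpen Ω) (hΩ : Ω ≠ univ)
    (hsphere : InteriorSphereCond Ω R) (hconv : ConvexOn ℝ Ω u) (hdiff : ContDiffOn ℝ 2 u Ω)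
    (hneg : ∀ x ∈ Ω, u x < 0)
    (hdet : ∀ x ∈ Ω, A * infDist x (frontier Ω) ^ (β - n - 1) * |u x| ^ (-α) ≤ hessianDet u x)
    (hy : y ∈ Ω) {d : ℝ} (hd : d = infDist y (frontier Ω)) :
    A * (d / 4) ^ (β - n - 1) * (2 * |u y|) ^ (-α) ≤
      (2 * |u y|) ^ n * (16 / d ^ 2 * (2 / (d * R)) ^ (n - 1)) := by
  have hdpos : 0 < d := hd ▸ infDist_frontier_pos_of_isOpen hopen hΩ hy
  obtain ⟨e, he, hcompact, hellipsoid⟩ :=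
    exists_ellipsoid_subset_of_interiorSphereCond hopen hconv.1 hΩ hR hsphere hy hd
  obtain ⟨x, hx, hhess⟩ := exists_mem_ellipsoid_hessianDet_le hopen hconv hdiff hneg
    (by positivity) he hcompact fun z hz => (hellipsoid z hz).1
  obtain ⟨hxΩ, hdx⟩ := hellipsoid x hx
  have hx'Ω := (hellipsoid _ (pointReflection_mem_ellipsoid hx)).1
  have hux : |u x| ≤ 2 * |u y| := by
    rw [abs_of_neg (hneg x hxΩ), abs_of_neg (hneg y hy)]
    linarith [two_mul_le_of_convexOn_of_pointReflection_mem hconv hxΩ hx'Ω (hneg _ hx'Ω).le]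
  have hux_rpow : (2 * |u y|) ^ (-α) ≤ |u x| ^ (-α) :=
    Real.rpow_le_rpow_of_nonpos (abs_pos.2 (hneg x hxΩ).ne) hux (neg_nonpos.2 hα)
  calc A * (d / 4) ^ (β - n - 1) * (2 * |u y|) ^ (-α)
      ≤ A * infDist x (frontier Ω) ^ (β - n - 1) * |u x| ^ (-α) := by
        gcongr
        · exact mul_nonneg hA.le (Real.rpow_nonneg infDist_nonneg _)
        · linarith
    _ ≤ hessianDet u x := hdet x hxΩ
    _ ≤ _ := hhess

end Barrier

section RealPower

theorem rpow_one_div_mul_rpow_div_le_of_mul_rpow_le_rpow {c d x β γ : ℝ} (hγ : 0 < γ)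
    (hc : 0 ≤ c) (hd : 0 ≤ d) (hx : 0 ≤ x) (h : c * d ^ β ≤ x ^ γ) :
    c ^ (1 / γ) * d ^ (β / γ) ≤ x := by
  rw [div_eq_mul_one_div β, Real.rpow_mul hd, ← Real.mul_rpow hc (Real.rpow_nonneg hd β), one_div]
  exact (Real.rpow_inv_le_iff_of_pos (mul_nonneg hc (Real.rpow_nonneg hd β)) hx hγ).2 h

theorem mul_rpow_le_rpow_add_of_mul_rpow_neg_le {n : ℕ} {A α β R d M : ℝ} (hn : 0 < n) (hR : 0 < R)
    (hd : 0 < d) (hM : 0 < M)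
    (h : A * (d / 4) ^ (β - n - 1) * M ^ (-α) ≤
      M ^ n * (16 / d ^ 2 * (2 / (d * R)) ^ (n - 1))) :
    A * 4 ^ (-(β - n - 1)) * (R / 2) ^ (n - 1) / 16 * d ^ β ≤ M ^ (n + α) := by
  have hpow_d : d ^ β = d ^ (β - n - 1) * (d ^ 2 * d ^ (n - 1)) := by
    rw [← pow_add, ← Real.rpow_natCast, ← Real.rpow_add hd, show 2 + (n - 1) = n + 1 by omega]
    push_cast
    ring_nf
  have hpow_quarter : (d / 4) ^ (β - n - 1) = d ^ (β - n - 1) * 4 ^ (-(β - n - 1)) := by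
    rw [Real.div_rpow hd.le (by norm_num), Real.rpow_neg (by norm_num), div_eq_mul_inv]
  have hcancel : (2 / (d * R)) ^ (n - 1) * (d ^ (n - 1) * (R / 2) ^ (n - 1)) = 1 := by
    rw [← mul_pow, ← mul_pow, show 2 / (d * R) * (d * (R / 2)) = 1 by field_simp, one_pow]
  rw [Real.rpow_neg hM.le, ← div_eq_mul_inv, div_le_iff₀ (by positivity)] at h
  calc A * 4 ^ (-(β - n - 1)) * (R / 2) ^ (n - 1) / 16 * d ^ β
      = A * (d / 4) ^ (β - n - 1) * (d ^ 2 / 16 * (d ^ (n - 1) * (R / 2) ^ (n - 1))) := by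
        rw [hpow_d, hpow_quarter]
        ring
    _ ≤ M ^ n * (16 / d ^ 2 * (2 / (d * R)) ^ (n - 1)) * M ^ α *
          (d ^ 2 / 16 * (d ^ (n - 1) * (R / 2) ^ (n - 1))) := by gcongr
    _ = M ^ n * M ^ α *
          ((2 / (d * R)) ^ (n - 1) * (d ^ (n - 1) * (R / 2) ^ (n - 1))) := by field_simp
    _ = M ^ (n + α) := by rw [hcancel, mul_one, Real.rpow_add hM, Real.rpow_natCast]

end RealPower

theorem pointwise_lower_bound_interior_sphere_general
    (n : ℕ) (A α β R : ℝ) (hA : 0 < A) (hα : 0 ≤ α) (hR : 0 < R) (hβ : (n : ℝ) + 1 ≤ β) :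
    ∃ C : ℝ, 0 < C ∧
      ∀ (Ω : Set (EuclideanSpace ℝ (Fin n))) (u : EuclideanSpace ℝ (Fin n) → ℝ),
        IsOpen Ω → Ω ≠ univ → InteriorSphereCond Ω R →
        ConvexOn ℝ Ω u → ContDiffOn ℝ 2 u Ω → (∀ x ∈ Ω, u x < 0) →
        (∀ x ∈ Ω, A * infDist x (frontier Ω) ^ (β - n - 1) * |u x| ^ (-α) ≤ hessianDet u x) →
        ∀ y ∈ Ω, C * infDist y (frontier Ω) ^ (β / (n + α)) ≤ |u y| := by
  refine ⟨1 / 2 * (A * 4 ^ (-(β - n - 1)) * (R / 2) ^ (n - 1) / 16) ^ (1 / (n + α)),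
    by positivity, fun Ω u hopen hΩ hsphere hconv hdiff hneg hdet y hy => ?_⟩
  have hn : 0 < n := by
    rw [Nat.pos_iff_ne_zero]
    rintro rfl
    exact hΩ (Subsingleton.eq_univ_of_nonempty ⟨y, hy⟩)
  have hd := infDist_frontier_pos_of_isOpen hopen hΩ hy
  have huy : 0 < 2 * |u y| := mul_pos two_pos (abs_pos.2 (hneg y hy).ne)
  have hbarrier := mul_rpow_mul_rpow_le_of_le_hessianDet hA hα hR hβ hopen hΩ hsphere hconv hdiff
    hneg hdet hy rfl
  have hroot := rpow_one_div_mul_rpow_div_le_of_mul_rpow_le_rpow (by positivity) (by positivity)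
    hd.le huy.le (mul_rpow_le_rpow_add_of_mul_rpow_neg_le hn hR hd huy hbarrier)
  linarith

/-- Theorem 1.3 (ii): on a domain satisfying the interior sphere condition with radius `R`,
`|u(y)| ≥ C d_y^{β/(n+α)}` with `C > 0` depending only on `β, α, A, n` and `R`. -/
theorem pointwise_lower_bound_interior_sphere
    (n : ℕ) (hn : 2 ≤ n) (A α β R : ℝ) (hA : 0 < A) (hα : 0 ≤ α) (hR : 0 < R)
    (hβ : (n : ℝ) + 1 ≤ β) :
    ∃ C : ℝ, 0 < C ∧
      ∀ (Ω : Set (EuclideanSpace ℝ (Fin n))) (F : EuclideanSpace ℝ (Fin n) → ℝ → ℝ)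
        (u : EuclideanSpace ℝ (Fin n) → ℝ),
        IsOpen Ω → Convex ℝ Ω → Bornology.IsBounded Ω → Ω.Nonempty →
        InteriorSphereCond Ω R →
        SatisfiesFLowerBound Ω F A α β →
        IsClassicalSolution Ω F u →
        ∀ y ∈ Ω, C * Metric.infDist y (frontier Ω) ^ (β / (n + α)) ≤ |u y| := by
  obtain ⟨C, hC, hbound⟩ := pointwise_lower_bound_interior_sphere_general n A α β R hA hα hR hβ
  refine ⟨C, hC, fun Ω F u hopen _ hbdd _ hsphere hF ⟨_, hconv, hdiff, hneg, _, hsol⟩ =>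
    hbound Ω u hopen ?_ hsphere hconv hdiff hneg fun x hx => ?_⟩
  · have : Nonempty (Fin n) := ⟨⟨0, by omega⟩⟩
    rintro rfl
    exact NormedSpace.unbounded_univ ℝ _ hbdd
  · rw [hsol x hx]
    exact hF.2.2 x hx (u x) (hneg x hx)
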